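/- (Upper bounds for detection.) Suppose that a satisfies at least one of the conditions: (i) a² n m p q → ∞; (ii) liminf a² n m / (2(n log(1/p) + m log(1/q))) > 1. Let ψ* = max{ψ^lin_H, ψ^max_T}, where H → ∞ with H < c·a√(n m p q) for some fixed c < 1, and T_{nm} = √(2 log G_{nm}). Then γ_{nm,a}(ψ*) → 0. -/

import Mathlib

open MeasureTheory ProbabilityTheory Filter Topology
open scoped Classical

noncomputable section

/-- Standard normal cumulative distribution function `Φ`. -/
def Phi (x : ℝ) : ℝ := ((gaussianReal 0 1) (Set.Iic x)).toReal

/-- Law `P_S` of the `N × M` observation matrix `Y_{ij} = s_{ij} + ξ_{ij}`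
with i.i.d. standard Gaussian noise. -/
def matLaw (N M : ℕ) (S : Fin N → Fin M → ℝ) : Measure ((Fin N × Fin M) → ℝ) :=
  Measure.pi fun ij => gaussianReal (S ij.1 ij.2) 1

/-- First-type error `α(ψ) = E_0 ψ`. -/
def alphaErr (N M : ℕ) (ψ : ((Fin N × Fin M) → ℝ) → ℝ) : ℝ :=
  ∫ y, ψ y ∂(matLaw N M fun _ _ => 0)

/-- Second-type error `β(ψ, S) = E_S (1 - ψ)`. -/
def betaErr (N M : ℕ) (S : Fin N → Fin M → ℝ) (ψ : ((Fin N × Fin M) → ℝ) → ℝ) : ℝ :=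
  ∫ y, (1 - ψ y) ∂(matLaw N M S)

/-- The alternative class `S_{nm,a}`: some `n × m` submatrix `C = A × B` has all entries `≥ a`,
and all other entries vanish. -/
def SAlt (N M n m : ℕ) (a : ℝ) : Set (Fin N → Fin M → ℝ) :=
  {S | ∃ (A : Finset (Fin N)) (B : Finset (Fin M)), A.card = n ∧ B.card = m ∧
      (∀ i j, i ∈ A → j ∈ B → a ≤ S i j) ∧ ∀ i j, ¬(i ∈ A ∧ j ∈ B) → S i j = 0}

/-- Maximal second-type error `β_{nm,a}(ψ)`. -/
def betaMax (N M n m : ℕ) (a : ℝ) (ψ : ((Fin N × Fin M) → ℝ) → ℝ) : ℝ :=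
  sSup ((fun S => betaErr N M S ψ) '' SAlt N M n m a)

/-- Linear statistic `t_lin`. -/
def tlin (N M : ℕ) (y : (Fin N × Fin M) → ℝ) : ℝ :=
  (∑ ij : Fin N × Fin M, y ij) / Real.sqrt ((N : ℝ) * M)

/-- Linear test `ψ^lin_H = 1{t_lin > H}`. -/
def psiLin (N M : ℕ) (H : ℝ) (y : (Fin N × Fin M) → ℝ) : ℝ :=
  if H < tlin N M y then 1 else 0

/-- Normalized submatrix sum `Y_C` for `C = A × B`. -/
def YC (N M : ℕ) (y : (Fin N × Fin M) → ℝ)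
    (A : Finset (Fin N)) (B : Finset (Fin M)) : ℝ :=
  (∑ i ∈ A, ∑ j ∈ B, y (i, j)) / Real.sqrt ((A.card : ℝ) * B.card)

/-- Scan statistic `t_max = max_{C ∈ C_{nm}} Y_C`. -/
def tmax (N M n m : ℕ) (y : (Fin N × Fin M) → ℝ) : ℝ :=
  sSup {v | ∃ (A : Finset (Fin N)) (B : Finset (Fin M)),
    A.card = n ∧ B.card = m ∧ v = YC N M y A B}

/-- `G_{nm} = C(N,n) · C(M,m)`, the number of `n × m` submatrices. -/
def Gnm (N M n m : ℕ) : ℕ := N.choose n * M.choose m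

/-- Threshold `T_{nm} = √(2 log G_{nm})`. -/
def Tnm (N M n m : ℕ) : ℝ := Real.sqrt (2 * Real.log (Gnm N M n m : ℝ))

/-- Scan test `ψ^max_T = 1{t_max > T}`. -/
def psiMax (N M n m : ℕ) (T : ℝ) (y : (Fin N × Fin M) → ℝ) : ℝ :=
  if T < tmax N M n m y then 1 else 0

/-- Total testing error `γ_{nm,a}(ψ) = α(ψ) + β_{nm,a}(ψ)`. -/
def gammaErr (N M n m : ℕ) (a : ℝ) (ψ : ((Fin N × Fin M) → ℝ) → ℝ) : ℝ :=
  alphaErr N M ψ + betaMax N M n m a ψ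

/-!
Every statistic here is a normalised sum `(∑_{k ∈ F} y_k) / √|F|`, which under `P_S` is Gaussian
with unit variance. A union bound over the `G` submatrices and the bound on the mean of `t_lin`
under an alternative give, for all thresholds,
`γ(ψ*) ≤ Φ(-H) + G Φ(-T) + Φ(H - a √(nmpq))`.
For `T = √(2 log G)` one has `e^{-T²/2} = 1/G`, so the factor `1/T` in Mills' inequality
`Φ(-T) ≤ e^{-T²/2} / T` is what sends the middle term to `0`; here `G ≥ N/n = 1/p → ∞`.
In the last term, `H < c a √(nmpq)` with `c < 1` gives `a √(nmpq) - H ≥ (1 - c) H → ∞`.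
-/

/-! ### Gaussian tails -/

lemma hasDerivAt_gaussianPDFReal (μ : ℝ) (v : NNReal) (x : ℝ) :
    HasDerivAt (gaussianPDFReal μ v) (-((x - μ) / v * gaussianPDFReal μ v x)) x := by
  have hexponent : HasDerivAt (fun y : ℝ => -(y - μ) ^ 2 / (2 * v)) (-(x - μ) / v) x := by
    convert! ((((hasDerivAt_id x).sub_const μ).pow 2).neg).div_const (2 * (v : ℝ)) using 1
    simp only [id, Nat.cast_ofNat, Nat.add_one_sub_one, pow_one, mul_one, ← mul_neg]
    exact (mul_div_mul_left _ _ two_ne_zero).symm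
  convert! hexponent.exp.const_mul (√(2 * Real.pi * v))⁻¹ using 1
  rw [gaussianPDFReal]
  ring

lemma tendsto_gaussianPDFReal_atTop (μ : ℝ) (v : NNReal) :
    Tendsto (gaussianPDFReal μ v) atTop (𝓝 0) := by
  rcases eq_or_ne v 0 with rfl | hv
  · rw [gaussianPDFReal_zero_var]
    exact tendsto_const_nhds
  have hv' : (0 : ℝ) < 2 * v := by positivity
  have hsq : Tendsto (fun y : ℝ => (y - μ) ^ 2 / (2 * v)) atTop atTop :=
    ((tendsto_pow_atTop two_ne_zero).comp (tendsto_atTop_add_const_right _ (-μ) tendsto_id)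
      ).atTop_div_const hv'
  simpa only [gaussianPDFReal_def, Function.comp_def, ← neg_div, mul_zero] using
    (Real.tendsto_exp_neg_atTop_nhds_zero.comp hsq).const_mul (√(2 * Real.pi * v))⁻¹

lemma gaussianReal_real_Ioi_le {μ x : ℝ} {v : NNReal} (hv : v ≠ 0) (hx : μ < x) :
    (gaussianReal μ v).real (Set.Ioi x) ≤ v / (x - μ) * gaussianPDFReal μ v x := by
  set r : ℝ := v / (x - μ)
  have hx' : 0 < x - μ := sub_pos.2 hx
  -- On `(x, ∞)` the density is at most `(y - μ) / (x - μ)` times itself, an exact derivative.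
  have hderiv (y : ℝ) : HasDerivAt (fun y => -(r * gaussianPDFReal μ v y))
      ((y - μ) / (x - μ) * gaussianPDFReal μ v y) y := by
    convert! ((hasDerivAt_gaussianPDFReal μ v y).const_mul r).neg using 1
    simp only [r]
    field_simp
  have hlim : Tendsto (fun y => -(r * gaussianPDFReal μ v y)) atTop (𝓝 0) := by
    simpa only [mul_zero, neg_zero] using ((tendsto_gaussianPDFReal_atTop μ v).const_mul r).neg
  have hratio {y : ℝ} (hy : y ∈ Set.Ioi x) : 1 ≤ (y - μ) / (x - μ) := by
    rw [one_le_div hx']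
    linarith [Set.mem_Ioi.1 hy]
  have hnonneg : ∀ y ∈ Set.Ioi x, 0 ≤ (y - μ) / (x - μ) * gaussianPDFReal μ v y := fun y hy =>
    mul_nonneg (zero_le_one.trans (hratio hy)) (gaussianPDFReal_nonneg μ v y)
  rw [measureReal_def, gaussianReal_apply_eq_integral μ hv,
    ENNReal.toReal_ofReal (integral_nonneg (gaussianPDFReal_nonneg μ v))]
  calc ∫ y in Set.Ioi x, gaussianPDFReal μ v y
      ≤ ∫ y in Set.Ioi x, (y - μ) / (x - μ) * gaussianPDFReal μ v y :=
        setIntegral_mono_on (integrable_gaussianPDFReal μ v).integrableOn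
          (integrableOn_Ioi_deriv_of_nonneg' (fun y _ => hderiv y) hnonneg hlim)
          measurableSet_Ioi fun y hy =>
            le_mul_of_one_le_left (gaussianPDFReal_nonneg μ v y) (hratio hy)
    _ = 0 - -(r * gaussianPDFReal μ v x) :=
        integral_Ioi_of_hasDerivAt_of_nonneg' (fun y _ => hderiv y) hnonneg hlim
    _ = r * gaussianPDFReal μ v x := by ring

lemma gaussianPDFReal_zero_one_le_exp (x : ℝ) :
    gaussianPDFReal 0 1 x ≤ Real.exp (-x ^ 2 / 2) := by
  have hsqrt : 1 ≤ √(2 * Real.pi) := Real.one_le_sqrt.2 (by linarith [Real.pi_gt_three])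
  simpa only [gaussianPDFReal, NNReal.coe_one, mul_one, sub_zero] using
    mul_le_of_le_one_left (Real.exp_pos _).le (inv_le_one_of_one_le₀ hsqrt)

lemma Phi_eq_cdf : Phi = cdf (gaussianReal 0 1) :=
  funext fun x => (cdf_eq_real (gaussianReal 0 1) x).symm

lemma Phi_nonneg (x : ℝ) : 0 ≤ Phi x :=
  ENNReal.toReal_nonneg

lemma monotone_Phi : Monotone Phi :=
  Phi_eq_cdf ▸ monotone_cdf _

lemma tendsto_Phi_atBot : Tendsto Phi atBot (𝓝 0) :=
  Phi_eq_cdf ▸ tendsto_cdf_atBot _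

lemma gaussianReal_real_Iic (μ x : ℝ) :
    (gaussianReal μ 1).real (Set.Iic x) = Phi (x - μ) := by
  have hmap := gaussianReal_map_const_add (μ := 0) (v := 1) μ
  rw [zero_add] at hmap
  rw [← hmap, map_measureReal_apply (by fun_prop) measurableSet_Iic, Set.preimage_const_add_Iic,
    measureReal_def, Phi]

lemma gaussianReal_real_Ioi (μ x : ℝ) :
    (gaussianReal μ 1).real (Set.Ioi x) = Phi (μ - x) := by
  have hmap := gaussianReal_map_const_sub (μ := 0) (v := 1) μ
  rw [sub_zero] at hmap
  have := nullSingletonClass_gaussianReal (μ := 0) (v := 1) one_ne_zero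
  rw [← hmap, map_measureReal_apply (by fun_prop) measurableSet_Ioi, Set.preimage_const_sub_Ioi,
    measureReal_congr Iio_ae_eq_Iic, measureReal_def, Phi]

lemma Phi_neg_le {x : ℝ} (hx : 0 < x) : Phi (-x) ≤ Real.exp (-x ^ 2 / 2) / x :=
  calc Phi (-x) = (gaussianReal 0 1).real (Set.Ioi x) := by rw [gaussianReal_real_Ioi, zero_sub]
    _ ≤ 1 / x * gaussianPDFReal 0 1 x := by
        simpa only [NNReal.coe_one, sub_zero] using gaussianReal_real_Ioi_le one_ne_zero hx
    _ ≤ 1 / x * Real.exp (-x ^ 2 / 2) := by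
        gcongr
        exact gaussianPDFReal_zero_one_le_exp x
    _ = Real.exp (-x ^ 2 / 2) / x := by ring

lemma mul_Phi_neg_sqrt_two_mul_log_le {G : ℝ} (hG : 1 < G) :
    G * Phi (-√(2 * Real.log G)) ≤ (√(2 * Real.log G))⁻¹ := by
  have hlog : 0 < 2 * Real.log G := mul_pos two_pos (Real.log_pos hG)
  have hG0 : 0 < G := one_pos.trans hG
  have hexp : Real.exp (-√(2 * Real.log G) ^ 2 / 2) = G⁻¹ := by
    rw [Real.sq_sqrt hlog.le, neg_div, mul_div_cancel_left₀ _ two_ne_zero, Real.exp_neg,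
      Real.exp_log hG0]
  calc G * Phi (-√(2 * Real.log G))
      ≤ G * (Real.exp (-√(2 * Real.log G) ^ 2 / 2) / √(2 * Real.log G)) := by
        gcongr
        exact Phi_neg_le (Real.sqrt_pos.2 hlog)
    _ = (√(2 * Real.log G))⁻¹ := by
        rw [hexp, ← mul_div_assoc, mul_inv_cancel₀ hG0.ne', one_div]

lemma tendsto_mul_Phi_neg_sqrt_two_mul_log :
    Tendsto (fun G : ℝ => G * Phi (-√(2 * Real.log G))) atTop (𝓝 0) := by
  have hsqrt : Tendsto (fun G : ℝ => √(2 * Real.log G)) atTop atTop :=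
    Real.tendsto_sqrt_atTop.comp (Real.tendsto_log_atTop.const_mul_atTop two_pos)
  refine squeeze_zero' ?_ ?_ hsqrt.inv_tendsto_atTop
  · filter_upwards [eventually_ge_atTop 0] with G hG using mul_nonneg hG (Phi_nonneg _)
  · filter_upwards [eventually_gt_atTop 1] with G hG using mul_Phi_neg_sqrt_two_mul_log_le hG

/-! ### Normalised sums -/

lemma map_sum_eq_gaussianReal_of_iIndepFun {Ω ι : Type*} {mΩ : MeasurableSpace Ω} {P : Measure Ω}
    {X : ι → Ω → ℝ} {μ : ι → ℝ} {v : ι → NNReal} (hX : iIndepFun X P)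
    (hmeas : ∀ i, Measurable (X i)) (hlaw : ∀ i, P.map (X i) = gaussianReal (μ i) (v i))
    (F : Finset ι) :
    P.map (∑ i ∈ F, X i) = gaussianReal (∑ i ∈ F, μ i) (∑ i ∈ F, v i) := by
  have := hX.isProbabilityMeasure
  induction F using Finset.induction_on with
  | empty => simp [Pi.zero_def]
  | insert k F hk ih =>
    rw [Finset.sum_insert hk, Finset.sum_insert hk, Finset.sum_insert hk]
    exact gaussianReal_add_gaussianReal_of_indepFun
      (hX.indepFun_finsetSum_of_notMem hmeas hk).symm (hlaw k) ih

section NormalizedSum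

variable {ι : Type*}

/-- The sum of the family `y` over `F`, divided by `√|F|`: the normalisation that keeps unit
variance. Both `tlin` and `YC` are of this form; on the empty set the value is `0`. -/
def normalizedSum (F : Finset ι) (y : ι → ℝ) : ℝ :=
  (∑ i ∈ F, y i) / √(F.card : ℝ)

@[fun_prop]
lemma measurable_normalizedSum (F : Finset ι) : Measurable (normalizedSum F) := by
  unfold normalizedSum
  fun_prop

variable [Fintype ι] {F : Finset ι}

lemma pi_gaussianReal_map_normalizedSum (μ : ι → ℝ) (hF : F.Nonempty) :
    (Measure.pi fun i => gaussianReal (μ i) 1).map (normalizedSum F)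
      = gaussianReal (normalizedSum F μ) 1 := by
  have hsum := map_sum_eq_gaussianReal_of_iIndepFun
    (iIndepFun_pi (μ := fun i => gaussianReal (μ i) 1) (X := fun _ => id)
      fun _ => aemeasurable_id) (fun i => measurable_pi_apply i)
    (fun i => (measurePreserving_eval (fun j => gaussianReal (μ j) 1) i).map_eq) F
  have hcard : (F.card : ℝ) ≠ 0 := by exact_mod_cast hF.card_ne_zero
  have hdiv := gaussianReal_map_div_const (μ := ∑ i ∈ F, μ i) (v := ∑ _ ∈ F, 1) √(F.card : ℝ)
  rw [← hsum, Measure.map_map (by fun_prop) (by fun_prop)] at hdiv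
  convert! hdiv using 2
  · ext y
    simp [normalizedSum]
  · ext
    simp [Real.sq_sqrt, div_self hcard]

lemma pi_gaussianReal_real_lt_normalizedSum (μ : ι → ℝ) (hF : F.Nonempty) (x : ℝ) :
    (Measure.pi fun i => gaussianReal (μ i) 1).real {y | x < normalizedSum F y}
      = Phi (normalizedSum F μ - x) := by
  rw [← gaussianReal_real_Ioi, ← pi_gaussianReal_map_normalizedSum μ hF,
    map_measureReal_apply (by fun_prop) measurableSet_Ioi]
  rfl

lemma pi_gaussianReal_real_normalizedSum_le (μ : ι → ℝ) (hF : F.Nonempty) (x : ℝ) :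
    (Measure.pi fun i => gaussianReal (μ i) 1).real {y | normalizedSum F y ≤ x}
      = Phi (x - normalizedSum F μ) := by
  rw [← gaussianReal_real_Iic, ← pi_gaussianReal_map_normalizedSum μ hF,
    map_measureReal_apply (by fun_prop) measurableSet_Iic]
  rfl

end NormalizedSum

/-! ### The combined test -/

section CombinedTest

variable {N M n m : ℕ}

lemma tlin_eq_normalizedSum : tlin N M = normalizedSum Finset.univ := by
  ext y
  simp [tlin, normalizedSum]

lemma YC_eq_normalizedSum (y : Fin N × Fin M → ℝ) (A : Finset (Fin N)) (B : Finset (Fin M)) :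
    YC N M y A B = normalizedSum (A ×ˢ B) y := by
  simp [YC, normalizedSum, Finset.sum_product]

/-- The collection `C_{nm}` of `n × m` submatrices, each encoded as a pair `(A, B)` of a row set
and a column set. -/
def submatrices (N M n m : ℕ) : Finset (Finset (Fin N) × Finset (Fin M)) :=
  Finset.univ.powersetCard n ×ˢ Finset.univ.powersetCard m

lemma mem_submatrices {C : Finset (Fin N) × Finset (Fin M)} :
    C ∈ submatrices N M n m ↔ C.1.card = n ∧ C.2.card = m := by
  simp [submatrices]

lemma card_submatrices : (submatrices N M n m).card = Gnm N M n m := by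
  simp [submatrices, Gnm]

lemma submatrices_nonempty (hn : n ≤ N) (hm : m ≤ M) : (submatrices N M n m).Nonempty := by
  rw [← Finset.card_pos, card_submatrices]
  exact Nat.mul_pos (Nat.choose_pos hn) (Nat.choose_pos hm)

lemma tmax_eq_sup' (hn : n ≤ N) (hm : m ≤ M) (y : Fin N × Fin M → ℝ) :
    tmax N M n m y = (submatrices N M n m).sup' (submatrices_nonempty hn hm)
      fun C => normalizedSum (C.1 ×ˢ C.2) y := by
  rw [Finset.sup'_eq_csSup_image, tmax]
  congr 1
  ext v
  simp [mem_submatrices, YC_eq_normalizedSum, and_assoc, eq_comm]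

/-- The combined test `ψ* = max{ψ^lin_H, ψ^max_T}`. -/
def psiStar (N M n m : ℕ) (H T : ℝ) (y : Fin N × Fin M → ℝ) : ℝ :=
  max (psiLin N M H y) (psiMax N M n m T y)

/-- The event on which `psiStar` rejects: the linear statistic exceeds `H`, or some normalised
submatrix sum exceeds `T`. -/
def rejectionRegion (N M n m : ℕ) (H T : ℝ) : Set (Fin N × Fin M → ℝ) :=
  {y | H < normalizedSum Finset.univ y} ∪
    ⋃ C ∈ submatrices N M n m, {y | T < normalizedSum (C.1 ×ˢ C.2) y}

lemma measurableSet_rejectionRegion (H T : ℝ) :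
    MeasurableSet (rejectionRegion N M n m H T) :=
  (measurableSet_lt measurable_const (by fun_prop)).union <|
    Finset.measurableSet_biUnion _ fun _ _ => measurableSet_lt measurable_const (by fun_prop)

lemma psiStar_eq_indicator (hn : n ≤ N) (hm : m ≤ M) (H T : ℝ) :
    psiStar N M n m H T = (rejectionRegion N M n m H T).indicator 1 := by
  ext y
  have hmem : y ∈ rejectionRegion N M n m H T ↔ H < tlin N M y ∨ T < tmax N M n m y := by
    simp [rejectionRegion, tlin_eq_normalizedSum, tmax_eq_sup' hn hm, Finset.lt_sup'_iff]
  rw [psiStar, psiLin, psiMax, Set.indicator_apply, hmem]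
  by_cases hlin : H < tlin N M y <;> by_cases hscan : T < tmax N M n m y <;> simp [hlin, hscan]

instance (S : Fin N → Fin M → ℝ) : IsProbabilityMeasure (matLaw N M S) := by
  unfold matLaw
  infer_instance

lemma alphaErr_psiStar (hn : n ≤ N) (hm : m ≤ M) (H T : ℝ) :
    alphaErr N M (psiStar N M n m H T)
      = (matLaw N M fun _ _ => 0).real (rejectionRegion N M n m H T) := by
  rw [alphaErr, psiStar_eq_indicator hn hm]
  exact integral_indicator_one (measurableSet_rejectionRegion H T)

lemma betaErr_psiStar (hn : n ≤ N) (hm : m ≤ M) (S : Fin N → Fin M → ℝ) (H T : ℝ) :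
    betaErr N M S (psiStar N M n m H T)
      = (matLaw N M S).real (rejectionRegion N M n m H T)ᶜ := by
  rw [betaErr, psiStar_eq_indicator hn hm,
    ← integral_indicator_one (measurableSet_rejectionRegion H T).compl, Set.indicator_compl]
  rfl

lemma alphaErr_psiStar_le (hn0 : 0 < n) (hn : n ≤ N) (hm0 : 0 < m) (hm : m ≤ M) (H T : ℝ) :
    alphaErr N M (psiStar N M n m H T) ≤ Phi (-H) + Gnm N M n m * Phi (-T) := by
  set P := matLaw N M fun _ _ => 0
  have htail {F : Finset (Fin N × Fin M)} (hF : F.Nonempty) (x : ℝ) :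
      P.real {y | x < normalizedSum F y} = Phi (-x) := by
    have h := pi_gaussianReal_real_lt_normalizedSum (fun _ => 0) hF x
    rwa [show normalizedSum F (fun _ => 0) = 0 by simp [normalizedSum], zero_sub] at h
  have hlin : P.real {y | H < normalizedSum Finset.univ y} = Phi (-H) :=
    htail ⟨(⟨0, hn0.trans_le hn⟩, ⟨0, hm0.trans_le hm⟩), Finset.mem_univ _⟩ H
  have hscan : ∀ C ∈ submatrices N M n m,
      P.real {y | T < normalizedSum (C.1 ×ˢ C.2) y} = Phi (-T) := by
    intro C hC
    obtain ⟨hA, hB⟩ := mem_submatrices.1 hC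
    exact htail ((Finset.card_pos.1 (hA ▸ hn0)).product (Finset.card_pos.1 (hB ▸ hm0))) T
  calc alphaErr N M (psiStar N M n m H T)
      = P.real (rejectionRegion N M n m H T) := alphaErr_psiStar hn hm H T
    _ ≤ P.real {y | H < normalizedSum Finset.univ y} +
          ∑ C ∈ submatrices N M n m, P.real {y | T < normalizedSum (C.1 ×ˢ C.2) y} :=
        (measureReal_union_le _ _).trans (by gcongr; exact measureReal_biUnion_finset_le _ _)
    _ = Phi (-H) + Gnm N M n m * Phi (-T) := by
        rw [hlin, Finset.sum_congr rfl hscan, Finset.sum_const, card_submatrices, nsmul_eq_mul]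

/-- The signal strength `a √(nmpq)`, with `p = n / N` and `q = m / M`: the smallest mean of `tlin`
over the alternative `SAlt`. -/
def linSignal (N M n m : ℕ) (a : ℝ) : ℝ :=
  a * √((n : ℝ) * m * ((n : ℝ) / N) * ((m : ℝ) / M))

lemma linSignal_eq (N M n m : ℕ) (a : ℝ) :
    linSignal N M n m a = n * m * a / √((N : ℝ) * M) := by
  have hsq : (n : ℝ) * m * ((n : ℝ) / N) * ((m : ℝ) / M) = (n * m : ℝ) ^ 2 / (N * M) := by ring
  rw [linSignal, hsq, Real.sqrt_div (by positivity), Real.sqrt_sq (by positivity)]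
  ring

lemma linSignal_le_normalizedSum {a : ℝ} {S : Fin N → Fin M → ℝ} (hS : S ∈ SAlt N M n m a) :
    linSignal N M n m a ≤ normalizedSum Finset.univ fun k : Fin N × Fin M => S k.1 k.2 := by
  obtain ⟨A, B, rfl, rfl, hge, hzero⟩ := hS
  have hsum : A.card * B.card * a ≤ ∑ k : Fin N × Fin M, S k.1 k.2 :=
    calc A.card * B.card * a = (A ×ˢ B).card • a := by simp
      _ ≤ ∑ k ∈ A ×ˢ B, S k.1 k.2 := Finset.card_nsmul_le_sum _ _ _ fun k hk =>
          hge _ _ (Finset.mem_product.1 hk).1 (Finset.mem_product.1 hk).2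
      _ = ∑ k : Fin N × Fin M, S k.1 k.2 := Finset.sum_subset (Finset.subset_univ _) fun k _ hk =>
          hzero _ _ (mt Finset.mem_product.2 hk)
  rw [linSignal_eq, normalizedSum, Finset.card_univ, Fintype.card_prod, Fintype.card_fin,
    Fintype.card_fin, Nat.cast_mul]
  gcongr

lemma betaErr_psiStar_le (hN : 0 < N) (hM : 0 < M) (hn : n ≤ N) (hm : m ≤ M) {a : ℝ}
    {S : Fin N → Fin M → ℝ} (hS : S ∈ SAlt N M n m a) (H T : ℝ) :
    betaErr N M S (psiStar N M n m H T) ≤ Phi (H - linSignal N M n m a) :=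
  calc betaErr N M S (psiStar N M n m H T)
      = (matLaw N M S).real (rejectionRegion N M n m H T)ᶜ := betaErr_psiStar hn hm S H T
    _ ≤ (matLaw N M S).real {y | normalizedSum Finset.univ y ≤ H} :=
        measureReal_mono fun y hy => not_lt.1 fun hlt : H < normalizedSum Finset.univ y =>
          hy (Or.inl hlt)
    _ = Phi (H - normalizedSum Finset.univ fun k : Fin N × Fin M => S k.1 k.2) :=
        pi_gaussianReal_real_normalizedSum_le _ ⟨(⟨0, hN⟩, ⟨0, hM⟩), Finset.mem_univ _⟩ H
    _ ≤ Phi (H - linSignal N M n m a) :=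
        monotone_Phi (sub_le_sub_left (linSignal_le_normalizedSum hS) H)

lemma gammaErr_psiStar_nonneg (hn : n ≤ N) (hm : m ≤ M) (a H T : ℝ) :
    0 ≤ gammaErr N M n m a (psiStar N M n m H T) := by
  refine add_nonneg ?_ (Real.sSup_nonneg ?_)
  · rw [alphaErr_psiStar hn hm]
    exact measureReal_nonneg
  · rintro _ ⟨S, -, rfl⟩
    exact measureReal_nonneg.trans_eq (betaErr_psiStar hn hm S H T).symm

lemma gammaErr_psiStar_le (hn0 : 0 < n) (hn : n ≤ N) (hm0 : 0 < m) (hm : m ≤ M) (a H T : ℝ) :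
    gammaErr N M n m a (psiStar N M n m H T)
      ≤ Phi (-H) + Gnm N M n m * Phi (-T) + Phi (H - linSignal N M n m a) := by
  refine add_le_add (alphaErr_psiStar_le hn0 hn hm0 hm H T) (Real.sSup_le ?_ (Phi_nonneg _))
  rintro _ ⟨S, hS, rfl⟩
  exact betaErr_psiStar_le (hn0.trans_le hn) (hm0.trans_le hm) hn hm hS H T

end CombinedTest

/-! ### Asymptotics -/

lemma le_mul_choose {k n : ℕ} (hk0 : 0 < k) (hk : k ≤ n) : n ≤ k * n.choose k := by
  obtain ⟨k, rfl⟩ := Nat.exists_eq_add_of_le' hk0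
  obtain ⟨n, rfl⟩ := Nat.exists_eq_add_of_le' (hk0.trans_le hk)
  rw [mul_comm, ← Nat.add_one_mul_choose_eq]
  exact Nat.le_mul_of_pos_right _ (Nat.choose_pos (by omega))

lemma div_le_Gnm {N M n m : ℕ} (hn0 : 0 < n) (hn : n ≤ N) (hm : m ≤ M) :
    (N : ℝ) / n ≤ Gnm N M n m := by
  have hmul : N ≤ n * Gnm N M n m :=
    calc N ≤ n * N.choose n := le_mul_choose hn0 hn
      _ ≤ n * Gnm N M n m :=
        Nat.mul_le_mul_left _ (Nat.le_mul_of_pos_right _ (Nat.choose_pos hm))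
  rw [div_le_iff₀' (by positivity)]
  exact_mod_cast hmul

section Limits

variable {ι : Type*} {l : Filter ι}

lemma tendsto_Gnm_atTop {N M n m : ι → ℕ}
    (hb : ∀ t, 1 ≤ n t ∧ n t ≤ N t ∧ 1 ≤ m t ∧ m t ≤ M t)
    (hp : Tendsto (fun t => (n t : ℝ) / N t) l (𝓝 0)) :
    Tendsto (fun t => (Gnm (N t) (M t) (n t) (m t) : ℝ)) l atTop := by
  have hpos (t : ι) : 0 < (n t : ℝ) / N t := by
    obtain ⟨hn0, hn, -⟩ := hb t
    have := hn0.trans hn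
    positivity
  have hinv : Tendsto (fun t => ((n t : ℝ) / N t)⁻¹) l atTop :=
    (tendsto_nhdsWithin_iff.2 ⟨hp, .of_forall hpos⟩).inv_tendsto_nhdsGT_zero
  refine tendsto_atTop_mono (fun t => ?_) hinv
  obtain ⟨hn0, hn, -, hm⟩ := hb t
  exact (inv_div _ _).trans_le (div_le_Gnm hn0 hn hm)

lemma tendsto_sub_atTop_of_lt_mul {c : ℝ} {f g : ι → ℝ} (hc : c < 1) (hg : ∀ t, 0 ≤ g t)
    (hf : Tendsto f l atTop) (hfg : ∀ t, f t < c * g t) :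
    Tendsto (fun t => g t - f t) l atTop := by
  refine tendsto_atTop_mono (fun t => ?_) (hf.const_mul_atTop (sub_pos.2 hc))
  have hle : f t ≤ g t := (hfg t).le.trans (mul_le_of_le_one_left (hg t) hc.le)
  calc (1 - c) * f t ≤ (1 - c) * g t := mul_le_mul_of_nonneg_left hle (sub_pos.2 hc).le
    _ = g t - c * g t := by ring
    _ ≤ g t - f t := sub_le_sub_left (hfg t).le _

theorem stmt2_general {N M n m : ι → ℕ} {a H : ι → ℝ}
    (hb : ∀ t, 1 ≤ n t ∧ n t ≤ N t ∧ 1 ≤ m t ∧ m t ≤ M t)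
    (hG : Tendsto (fun t => (Gnm (N t) (M t) (n t) (m t) : ℝ)) l atTop)
    (hH : Tendsto H l atTop)
    (hsignal : Tendsto (fun t => linSignal (N t) (M t) (n t) (m t) (a t) - H t) l atTop) :
    Tendsto (fun t => gammaErr (N t) (M t) (n t) (m t) (a t)
      (psiStar (N t) (M t) (n t) (m t) (H t) (Tnm (N t) (M t) (n t) (m t)))) l (𝓝 0) := by
  have hlin := tendsto_Phi_atBot.comp (tendsto_neg_atTop_atBot.comp hH)
  have hscan := tendsto_mul_Phi_neg_sqrt_two_mul_log.comp hG
  have hbeta := tendsto_Phi_atBot.comp (tendsto_neg_atTop_atBot.comp hsignal)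
  have hbound := (hlin.add hscan).add hbeta
  simp only [Function.comp_def, neg_sub, add_zero] at hbound
  refine squeeze_zero (fun t => ?_) (fun t => ?_) hbound <;> obtain ⟨hn0, hn, hm0, hm⟩ := hb t
  · exact gammaErr_psiStar_nonneg hn hm _ _ _
  · exact gammaErr_psiStar_le hn0 hn hm0 hm _ _ _

end Limits

/-- Theorem 1 (upper bounds): if `a² n m p q → ∞` or
`liminf a² n m / (2(n log(1/p) + m log(1/q))) > 1`, then the combined test
`ψ* = max{ψ^lin_H, ψ^max_T}` with `H → ∞`, `H < c a √(nmpq)` for some `c < 1`,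
and `T_{nm} = √(2 log G_{nm})` satisfies `γ_{nm,a}(ψ*) → 0`. -/
theorem stmt2 (N M n m : ℕ → ℕ) (a H : ℕ → ℝ)
    (hb : ∀ t, 1 ≤ n t ∧ n t ≤ N t ∧ 1 ≤ m t ∧ m t ≤ M t)
    (ha : ∀ t, 0 < a t)
    (hN : Tendsto N atTop atTop) (hM : Tendsto M atTop atTop)
    (hn : Tendsto n atTop atTop) (hm : Tendsto m atTop atTop)
    (hp : Tendsto (fun t => (n t : ℝ) / N t) atTop (nhds 0))
    (hq : Tendsto (fun t => (m t : ℝ) / M t) atTop (nhds 0))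
    (hH : Tendsto H atTop atTop)
    (hHc : ∃ c : ℝ, c < 1 ∧ ∀ t,
      H t < c * (a t * Real.sqrt ((n t : ℝ) * m t * ((n t : ℝ) / N t) * ((m t : ℝ) / M t))))
    (hcond :
      Tendsto (fun t =>
          a t ^ 2 * ((n t : ℝ) * m t * ((n t : ℝ) / N t) * ((m t : ℝ) / M t)))
        atTop atTop ∨
      1 < Filter.liminf (fun t =>
          a t ^ 2 * ((n t : ℝ) * m t) /
            (2 * ((n t : ℝ) * Real.log ((N t : ℝ) / n t) +
              (m t : ℝ) * Real.log ((M t : ℝ) / m t)))) atTop) :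
    Tendsto (fun t =>
      gammaErr (N t) (M t) (n t) (m t) (a t) (fun y =>
        max (psiLin (N t) (M t) (H t) y)
          (psiMax (N t) (M t) (n t) (m t) (Tnm (N t) (M t) (n t) (m t)) y)))
      atTop (nhds 0) := by
  obtain ⟨c, hc, hHc⟩ := hHc
  exact stmt2_general hb (tendsto_Gnm_atTop hb hp) hH <| tendsto_sub_atTop_of_lt_mul hc
    (fun t => mul_nonneg (ha t).le (Real.sqrt_nonneg _)) hH hHc
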